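/- For every t ≥ 1 and n ≥ 1, the number W_t(n) of t-stack sortable permutations of length n satisfies W_t(n) ≤ (t+1)^{2n}. -/

import Mathlib

def push (x : ℕ) : List ℕ → List ℕ → List ℕ × List ℕ
  | [], out => ([x], out)
  | t :: s, out => if t < x then push x s (out ++ [t]) else (x :: t :: s, out)

def sortAux : List ℕ → List ℕ → List ℕ → List ℕ
  | [], stack, out => out ++ stack
  | x :: xs, stack, out =>
      let r := push x stack out
      sortAux xs r.1 r.2

/-- The stack sorting map `s`: `s(∅) = ∅` and `s(L n R) = s(L) s(R) n` with `n` maximal. -/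
def stackSort (p : List ℕ) : List ℕ := sortAux p [] []

open List Function

/-! ### Stack sorting shortens an increasing run followed by a smaller entry -/

/-- The output of the sorting pass with remaining input `xs` and stack `st`. -/
def sortOut : List ℕ → List ℕ → List ℕ
  | [], st => st
  | x :: xs, st =>
      st.takeWhile (fun y => decide (y < x)) ++
        sortOut xs (x :: st.dropWhile (fun y => decide (y < x)))

theorem push_eq (x : ℕ) (st out : List ℕ) :
    push x st out = (x :: st.dropWhile (fun y => decide (y < x)),
      out ++ st.takeWhile (fun y => decide (y < x))) := by
  induction st generalizing out with
  | nil => simp [push]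
  | cons y st ih =>
    by_cases h : y < x <;> simp [push, h, ih]

theorem sortAux_eq (xs st out : List ℕ) : sortAux xs st out = out ++ sortOut xs st := by
  induction xs generalizing st out with
  | nil => simp [sortAux, sortOut]
  | cons x xs ih => simp [sortAux, sortOut, push_eq, ih]

theorem stackSort_eq (p : List ℕ) : stackSort p = sortOut p [] := by
  simp [stackSort, sortAux_eq]

theorem sortOut_perm (xs st : List ℕ) : (sortOut xs st).Perm (xs ++ st) := by
  induction xs generalizing st with
  | nil => simp [sortOut]
  | cons x xs ih =>
    rw [sortOut]
    refine ((ih _).append_left _).trans ?_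
    conv_rhs => rw [← takeWhile_append_dropWhile (p := fun y => decide (y < x)) (l := st)]
    simp only [List.perm_iff_count, count_append, count_cons]
    intro a
    omega

theorem mem_takeWhile_or_dropWhile {x b : ℕ} {st : List ℕ} (hb : b ∈ st) :
    b ∈ st.takeWhile (fun y => decide (y < x)) ∨ b ∈ st.dropWhile (fun y => decide (y < x)) := by
  rw [← mem_append, takeWhile_append_dropWhile]
  exact hb

theorem mem_takeWhile_of_lt {x b : ℕ} {st : List ℕ} (hst : st.Pairwise (· ≤ ·))
    (hb : b ∈ st) (hbx : b < x) : b ∈ st.takeWhile (fun y => decide (y < x)) := by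
  induction st with
  | nil => simp at hb
  | cons y st ih =>
    rw [pairwise_cons] at hst
    have hy : y < x := by
      rcases mem_cons.1 hb with rfl | h
      · exact hbx
      · exact (hst.1 b h).trans_lt hbx
    rw [takeWhile_cons_of_pos (by simpa using hy)]
    rcases mem_cons.1 hb with rfl | h
    · simp
    · exact mem_cons_of_mem _ (ih hst.2 h)

theorem pairwise_push {x : ℕ} {st : List ℕ} (hst : st.Pairwise (· ≤ ·)) :
    (x :: st.dropWhile (fun y => decide (y < x))).Pairwise (· ≤ ·) := by
  induction st with
  | nil => simp
  | cons y st ih =>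
    by_cases h : y < x
    · rw [dropWhile_cons_of_pos (by simpa using h)]
      exact ih hst.of_cons
    · rw [dropWhile_cons_of_neg (by simpa using h), pairwise_cons]
      refine ⟨fun z hz => ?_, hst⟩
      rw [pairwise_cons] at hst
      rcases mem_cons.1 hz with rfl | hz
      · omega
      · have := hst.1 z hz; omega

theorem pair_sublist_append {b a : ℕ} {l₁ l₂ : List ℕ} (hb : b ∈ l₁) (ha : a ∈ l₂) :
    [b, a] <+ l₁ ++ l₂ :=
  (singleton_sublist.2 hb).append (singleton_sublist.2 ha)

theorem sortOut_stack_lt {b c : ℕ} (hbc : b < c) {xs st : List ℕ}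
    (hst : st.Pairwise (· ≤ ·)) (hb : b ∈ st) (hc : c ∈ xs) : [b, c] <+ sortOut xs st := by
  induction xs generalizing st with
  | nil => simp at hc
  | cons x xs ih =>
    rw [sortOut]
    have hmem : b ∈ st.takeWhile (fun y => decide (y < x)) →
        [b, c] <+ st.takeWhile (fun y => decide (y < x)) ++
          sortOut xs (x :: st.dropWhile (fun y => decide (y < x))) := fun h =>
      pair_sublist_append h ((sortOut_perm _ _).mem_iff.2 (by
        rcases mem_cons.1 hc with rfl | hc <;> simp [*]))
    rcases mem_cons.1 hc with rfl | hc'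
    · exact hmem (mem_takeWhile_of_lt hst hb hbc)
    · rcases mem_takeWhile_or_dropWhile (x := x) hb with h | h
      · exact hmem h
      · exact (ih (pairwise_push hst) (mem_cons_of_mem _ h) hc').trans (sublist_append_right _ _)

theorem sortOut_stack_pop {b c a : ℕ} (hbc : b < c) {xs st : List ℕ}
    (hst : st.Pairwise (· ≤ ·)) (hb : b ∈ st) (hca : [c, a] <+ xs) :
    [b, a] <+ sortOut xs st := by
  induction xs generalizing st with
  | nil => simp at hca
  | cons x xs ih =>
    rw [sortOut]
    have ha : a ∈ xs := by
      cases hca with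
      | cons _ h => exact h.subset (by simp)
      | cons_cons _ h => exact h.subset (by simp)
    have hmem : b ∈ st.takeWhile (fun y => decide (y < x)) →
        [b, a] <+ st.takeWhile (fun y => decide (y < x)) ++
          sortOut xs (x :: st.dropWhile (fun y => decide (y < x))) := fun h =>
      pair_sublist_append h ((sortOut_perm _ _).mem_iff.2 (by simp [ha]))
    cases hca with
    | cons_cons _ h => exact hmem (mem_takeWhile_of_lt hst hb hbc)
    | cons _ h =>
      rcases mem_takeWhile_or_dropWhile (x := x) hb with hb' | hb'
      · exact hmem hb'
      · exact (ih (pairwise_push hst) (mem_cons_of_mem _ hb') h).trans (sublist_append_right _ _)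

theorem sortOut_input_lt {b c : ℕ} (hbc : b < c) {xs st : List ℕ}
    (hst : st.Pairwise (· ≤ ·)) (h : [b, c] <+ xs) : [b, c] <+ sortOut xs st := by
  induction xs generalizing st with
  | nil => simp at h
  | cons x xs ih =>
    rw [sortOut]
    refine Sublist.trans ?_ (sublist_append_right _ _)
    cases h with
    | cons _ h => exact ih (pairwise_push hst) h
    | cons_cons _ h =>
      exact sortOut_stack_lt hbc (pairwise_push hst) (by simp) (singleton_sublist.1 h)

theorem sortOut_input_pop {b c a : ℕ} (hbc : b < c) {xs st : List ℕ}
    (hst : st.Pairwise (· ≤ ·)) (h : [b, c, a] <+ xs) : [b, a] <+ sortOut xs st := by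
  induction xs generalizing st with
  | nil => simp at h
  | cons x xs ih =>
    rw [sortOut]
    refine Sublist.trans ?_ (sublist_append_right _ _)
    cases h with
    | cons _ h => exact ih (pairwise_push hst) h
    | cons_cons _ h => exact sortOut_stack_pop hbc (pairwise_push hst) (by simp) h

theorem stackSort_perm (p : List ℕ) : (stackSort p).Perm p := by
  simpa [stackSort_eq] using sortOut_perm p []

theorem sublist_of_isChain_pair {l : List ℕ} (hl : l.Nodup) :
    ∀ {s : List ℕ}, (∀ a ∈ s, a ∈ l) → s.IsChain (fun u v => [u, v] <+ l) → s <+ l := by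
  intro s
  induction l generalizing s with
  | nil =>
    intro hs _
    cases s with
    | nil => simp
    | cons a s => simpa using hs a (by simp)
  | cons x l ih =>
    intro hs hc
    have key : ∀ {u v : ℕ}, [u, v] <+ x :: l → v ∈ l ∧ v ≠ x := by
      intro u v h
      have hv : v ∈ l := by
        cases h with
        | cons _ h => exact h.subset (by simp)
        | cons_cons _ h => exact h.subset (by simp)
      exact ⟨hv, fun e => (nodup_cons.1 hl).1 (e ▸ hv)⟩
    have tail : ∀ {s : List ℕ}, x ∉ s → (∀ a ∈ s, a ∈ x :: l) →
        s.IsChain (fun u v => [u, v] <+ x :: l) → s <+ l := by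
      intro s hx hs hc
      refine ih (nodup_cons.1 hl).2 (fun a ha => ?_) ?_
      · rcases mem_cons.1 (hs a ha) with rfl | h
        · exact absurd ha hx
        · exact h
      · rw [isChain_iff_getElem] at hc ⊢
        intro i hi
        have h := hc i hi
        cases h with
        | cons _ h => exact h
        | cons_cons _ h => exact absurd (getElem_mem _) hx
    have notin : ∀ {a : ℕ} {s : List ℕ}, (a :: s).IsChain (fun u v => [u, v] <+ x :: l) →
        x ∉ s := by
      intro a s
      induction s generalizing a with
      | nil => simp
      | cons b s ihs =>
        intro h hx
        rw [isChain_cons_cons] at h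
        rcases mem_cons.1 hx with rfl | hx
        · exact (key h.1).2 rfl
        · exact ihs h.2 hx
    cases s with
    | nil => simp
    | cons a s =>
      have hx := notin hc
      by_cases hax : a = x
      · subst hax
        exact (tail hx (fun b hb => hs b (mem_cons_of_mem _ hb)) hc.tail).cons_cons _
      · exact (tail (by simp [hx, Ne.symm hax]) hs hc).cons _

/-- An increasing run of length `k` in `p` followed by a smaller entry. -/
def HasRun (k : ℕ) (p : List ℕ) : Prop :=
  ∃ s a, s.length = k ∧ s.Pairwise (· < ·) ∧ (∀ b ∈ s, a < b) ∧ s ++ [a] <+ p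

theorem sublist_stackSort {p : List ℕ} {a c : ℕ} (hp : p.Nodup) {s : List ℕ}
    (hs : (s ++ [c]).Pairwise (· < ·)) (hsub : s ++ [c, a] <+ p) :
    s ++ [a] <+ stackSort p := by
  have hperm := stackSort_perm p
  refine sublist_of_isChain_pair (hperm.nodup_iff.2 hp) (fun b hb => hperm.mem_iff.2 ?_) ?_
  · exact hsub.subset (by simp at hb ⊢; tauto)
  · rw [stackSort_eq]
    clear hperm
    induction s with
    | nil => simp
    | cons b s ih =>
      have hbs := ih hs.of_cons ((sublist_cons_self _ _).trans hsub)
      cases s with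
      | nil =>
        simp only [cons_append, nil_append, pairwise_cons, mem_singleton, forall_eq] at hs hsub ⊢
        rw [isChain_cons_cons]
        exact ⟨sortOut_input_pop hs.1 Pairwise.nil hsub, by simp⟩
      | cons d s =>
        simp only [cons_append] at hs hsub hbs ⊢
        rw [isChain_cons_cons]
        refine ⟨sortOut_input_lt ((pairwise_cons.1 hs).1 d (by simp)) Pairwise.nil ?_, hbs⟩
        exact Sublist.trans (by simp) hsub

theorem HasRun.stackSort {k : ℕ} {p : List ℕ} (hp : p.Nodup) (h : HasRun (k + 2) p) :
    HasRun (k + 1) (stackSort p) := by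
  obtain ⟨s, a, hlen, hinc, hlt, hsub⟩ := h
  have hne : s ≠ [] := by rintro rfl; simp at hlen
  obtain ⟨r, c, rfl⟩ : ∃ r c, s = r ++ [c] := ⟨_, _, (dropLast_append_getLast hne).symm⟩
  refine ⟨r, a, by simpa using hlen, (pairwise_append.1 hinc).1,
    fun b hb => hlt b (by simp [hb]), sublist_stackSort hp hinc (by simpa using hsub)⟩

theorem HasRun.iterate {t : ℕ} {p : List ℕ} (hp : p.Nodup) (h : HasRun (t + 1) p) :
    HasRun 1 (_root_.stackSort^[t] p) := by
  induction t generalizing p with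
  | zero => simpa using h
  | succ t ih =>
    rw [iterate_succ_apply]
    exact ih ((stackSort_perm p).nodup_iff.2 hp) (h.stackSort hp)

theorem not_hasRun_of_sortable {t n : ℕ} {p : List ℕ} (hp : p.Perm (range' 1 n))
    (hs : stackSort^[t] p = range' 1 n) : ¬ HasRun (t + 1) p := by
  intro h
  have h1 := h.iterate (hp.nodup_iff.2 nodup_range')
  rw [hs] at h1
  obtain ⟨s, a, hlen, -, hlt, hsub⟩ := h1
  obtain ⟨b, rfl⟩ := length_eq_one_iff.1 hlen
  have h2 : [b, a].Pairwise (· < ·) := Pairwise.sublist hsub pairwise_lt_range'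
  have h3 := hlt b (by simp)
  simp at h2
  omega

/-! ### Growth labels on the board above the right-to-left minima -/

/-- Carry the column label `c` down through the rows `v < V` lying above the board's boundary;
equal row and column labels are both incremented. -/
def bump (xs : List ℕ) : ℕ → ℕ → (ℕ → ℕ) → ℕ × (ℕ → ℕ)
  | 0, c, g => (c, g)
  | v + 1, c, g =>
      if (∃ y ∈ xs, y < v) ∧ g v = c then bump xs v (c + 1) (update g v (c + 1))
      else bump xs v c g

/-- The column labels of `l`, and the final row labels, starting from row labels `g`. -/
def growth : List ℕ → (ℕ → ℕ) → List ℕ × (ℕ → ℕ)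
  | [], g => ([], g)
  | x :: xs, g =>
      if ∃ y ∈ xs, y < x then
        let r := bump xs x 1 (update g x 1)
        (r.1 :: (growth xs r.2).1, (growth xs r.2).2)
      else (0 :: (growth xs g).1, (growth xs g).2)

/-- The right-to-left minima. -/
def rlMin : List ℕ → List ℕ
  | [] => []
  | x :: xs => if ∃ y ∈ xs, y < x then rlMin xs else x :: rlMin xs

/-- `g'` arises from `f` by inserting the entry `x` with `xs` still to come. -/
structure Bumped (xs : List ℕ) (x : ℕ) (f g : ℕ → ℕ) : Prop where
  step : ∀ v, g v = f v ∨ g v = f v + 1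
  zero : ∀ v, g v ≠ f v → f v = 0 → v = x
  ladder : ∀ v, g v ≠ f v → f v ≠ 0 →
    ∃ u > v, g u ≠ f u ∧ f u + 1 = f v ∧ ∀ w, v < w → w < u → f w ≠ f v
  low : ∀ v, g v ≠ f v → ∃ y ∈ xs, y < v
  start : g x = 1

theorem Bumped.bump {xs : List ℕ} {x : ℕ} {f : ℕ → ℕ} {V c : ℕ} {g : ℕ → ℕ}
    (h : Bumped xs x f g) (hV : V ≤ x) (hc : 1 ≤ c) (hg : ∀ v < V, g v = f v)
    (hlast : ∃ u ≥ V, g u ≠ f u ∧ g u = c ∧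
      ∀ w, V ≤ w → w < u → (∃ y ∈ xs, y < w) → f w ≠ c) :
    Bumped xs x f (bump xs V c g).2 ∧ 1 ≤ (_root_.bump xs V c g).1 ∧
      ∃ u, (_root_.bump xs V c g).2 u = (_root_.bump xs V c g).1 := by
  induction V generalizing c g with
  | zero =>
    obtain ⟨u, -, -, hu, -⟩ := hlast
    exact ⟨h, hc, u, hu⟩
  | succ v ih =>
    obtain ⟨u, huV, hne, hu, hw⟩ := hlast
    rw [_root_.bump]
    split_ifs with hif
    · obtain ⟨hy, hgv⟩ := hif
      have hfv : f v = c := by rw [← hg v (by omega), hgv]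
      have hup : ∀ w, w ≠ v → update g v (c + 1) w = g w := fun w hwv => update_of_ne hwv _ _
      refine ih ⟨fun w => ?_, fun w h1 h2 => ?_, fun w h1 h2 => ?_, fun w h1 => ?_, ?_⟩
        (by omega) (by omega) (fun w hwv => ?_) ⟨v, le_rfl, ?_, ?_, fun w h1 h2 => ?_⟩
      · by_cases hwv : w = v
        · subst hwv; simp [hfv]
        · rw [hup w hwv]; exact h.step w
      · by_cases hwv : w = v
        · subst hwv; omega
        · rw [hup w hwv] at h1; exact h.zero w h1 h2
      · by_cases hwv : w = v
        · subst hwv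
          refine ⟨u, by omega, by rwa [hup u (by omega)], ?_, fun z h3 h4 => ?_⟩
          · rcases h.step u with h5 | h5 <;> omega
          · obtain ⟨y, hy1, hy2⟩ := hy
            rw [hfv]
            exact hw z h3 h4 ⟨y, hy1, by omega⟩
        · rw [hup w hwv] at h1
          obtain ⟨z, h3, h4, h5⟩ := h.ladder w h1 h2
          refine ⟨z, h3, ?_, h5⟩
          by_cases hzv : z = v
          · subst hzv; simp [hfv]
          · rwa [hup z hzv]
      · by_cases hwv : w = v
        · subst hwv; exact hy
        · rw [hup w hwv] at h1; exact h.low w h1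
      · rw [hup x (by omega)]; exact h.start
      · rw [hup w (by omega)]; exact hg w (by omega)
      · simp [hfv]
      · simp
      · omega
    · refine ih h (by omega) hc (fun w hwv => hg w (by omega)) ⟨u, by omega, hne, hu, ?_⟩
      intro w h1 h2 h3
      by_cases hwv : w = v
      · subst hwv
        rw [← hg w (by omega)]
        exact fun h4 => hif ⟨h3, h4⟩
      · exact hw w (by omega) h2 h3

theorem bumped_insert {xs : List ℕ} {x : ℕ} {f : ℕ → ℕ} (hx : f x = 0)
    (hlow : ∃ y ∈ xs, y < x) :
    Bumped xs x f (bump xs x 1 (update f x 1)).2 ∧ 1 ≤ (bump xs x 1 (update f x 1)).1 ∧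
      ∃ u, (bump xs x 1 (update f x 1)).2 u = (bump xs x 1 (update f x 1)).1 := by
  have hup : ∀ w, update f x 1 w ≠ f w → w = x := fun w h => by
    by_contra hwx
    exact h (update_of_ne hwx _ _)
  refine Bumped.bump ⟨fun w => ?_, fun w h _ => hup w h, fun w h1 h2 => ?_, fun w h => ?_, ?_⟩
    le_rfl le_rfl (fun w hw => update_of_ne (by omega) _ _)
    ⟨x, le_rfl, by simp [hx], by simp, fun w h1 h2 => by omega⟩
  · by_cases hwx : w = x
    · subst hwx; simp [hx]
    · exact Or.inl (update_of_ne hwx _ _)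
  · rw [hup w h1] at h2; exact absurd hx h2
  · rw [hup w h]; exact hlow
  · simp

theorem Bumped.eq_zero_iff {xs : List ℕ} {x : ℕ} {f g : ℕ → ℕ} (h : Bumped xs x f g) (v : ℕ) :
    g v = 0 ↔ f v = 0 ∧ v ≠ x := by
  have h1 := h.step v
  constructor
  · intro h2
    refine ⟨by omega, ?_⟩
    rintro rfl
    have := h.start
    omega
  · rintro ⟨h2, h3⟩
    by_contra h4
    exact h3 (h.zero v (by omega) h2)

/-! ### The labels determine the permutation -/

theorem bump_injective {xs : List ℕ} {V c₁ c₂ : ℕ} {g₁ g₂ : ℕ → ℕ}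
    (h : bump xs V c₁ g₁ = bump xs V c₂ g₂) : c₁ = c₂ ∧ g₁ = g₂ := by
  induction V generalizing c₁ c₂ g₁ g₂ with
  | zero => simpa [bump] using h
  | succ v ih =>
    rw [bump, bump] at h
    split_ifs at h with h1 h2 h2
    · obtain ⟨hc, hg⟩ := ih h
      have hc' : c₁ = c₂ := by omega
      refine ⟨hc', funext fun w => ?_⟩
      by_cases hw : w = v
      · subst hw; rw [h1.2, h2.2, hc']
      · have := congrFun hg w
        rwa [update_of_ne hw, update_of_ne hw] at this
    · obtain ⟨hc, hg⟩ := ih h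
      exact absurd ⟨h1.1, by rw [← hg, ← hc]; simp⟩ h2
    · obtain ⟨hc, hg⟩ := ih h
      exact absurd ⟨h2.1, by rw [hg, hc]; simp⟩ h1
    · exact ih h

theorem bump_insert_ne {xs : List ℕ} {x V c : ℕ} {f g : ℕ → ℕ} (hlow : ∃ y ∈ xs, y < x)
    (hV : x < V) (hc : 1 ≤ c) : bump xs x 1 (update f x 1) ≠ bump xs V c g := by
  induction V generalizing c g with
  | zero => omega
  | succ v ih =>
    rw [bump]
    by_cases hv : x = v
    · subst hv
      split_ifs with h1
      · intro h
        have := (bump_injective h).1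
        omega
      · intro h
        obtain ⟨h2, h3⟩ := bump_injective h
        exact h1 ⟨hlow, by rw [← h3, ← h2]; simp⟩
    · split_ifs
      · exact ih (by omega) (by omega)
      · exact ih (by omega) hc

theorem bump_insert_injective {xs : List ℕ} {x₁ x₂ : ℕ} {f₁ f₂ : ℕ → ℕ}
    (hl₁ : ∃ y ∈ xs, y < x₁) (hl₂ : ∃ y ∈ xs, y < x₂) (h₁ : f₁ x₁ = 0) (h₂ : f₂ x₂ = 0)
    (h : bump xs x₁ 1 (update f₁ x₁ 1) = bump xs x₂ 1 (update f₂ x₂ 1)) :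
    x₁ = x₂ ∧ f₁ = f₂ := by
  rcases lt_trichotomy x₁ x₂ with hlt | rfl | hlt
  · exact absurd h (bump_insert_ne hl₁ hlt le_rfl)
  · refine ⟨rfl, funext fun w => ?_⟩
    by_cases hw : w = x₁
    · rw [hw, h₁, h₂]
    · have := congrFun (bump_injective h).2 w
      rwa [update_of_ne hw, update_of_ne hw] at this
  · exact absurd h.symm (bump_insert_ne hl₂ hlt le_rfl)

theorem growth_length (l : List ℕ) (f : ℕ → ℕ) : (growth l f).1.length = l.length := by
  induction l generalizing f with
  | nil => rfl
  | cons x xs ih =>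
    rw [growth]
    split_ifs <;> simp [ih]

theorem growth_injective {l₁ l₂ : List ℕ} {f₁ f₂ : ℕ → ℕ} (hn₁ : l₁.Nodup) (hn₂ : l₂.Nodup)
    (hf₁ : ∀ v ∈ l₁, f₁ v = 0) (hf₂ : ∀ v ∈ l₂, f₂ v = 0) (hmin : rlMin l₁ = rlMin l₂)
    (h : growth l₁ f₁ = growth l₂ f₂) : l₁ = l₂ ∧ f₁ = f₂ := by
  induction l₁ generalizing l₂ f₁ f₂ with
  | nil =>
    have hlen := growth_length l₂ f₂
    rw [← h] at hlen
    obtain rfl := length_eq_zero_iff.1 hlen.symm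
    exact ⟨rfl, by simpa [growth] using h⟩
  | cons x₁ xs₁ ih =>
    cases l₂ with
    | nil =>
      have hlen := growth_length (x₁ :: xs₁) f₁
      rw [h] at hlen
      simp [growth] at hlen
    | cons x₂ xs₂ =>
      rw [nodup_cons] at hn₁ hn₂
      have hx₁ := hf₁ x₁ (by simp)
      have hx₂ := hf₂ x₂ (by simp)
      have fresh : ∀ {xs : List ℕ} {x : ℕ} {f g : ℕ → ℕ}, x ∉ xs → (∀ v ∈ x :: xs, f v = 0) →
          Bumped xs x f g → ∀ v ∈ xs, g v = 0 := fun hx hf hb v hv =>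
        (hb.eq_zero_iff v).2 ⟨hf v (mem_cons_of_mem _ hv), fun e => hx (e ▸ hv)⟩
      rw [growth, growth] at h
      rw [rlMin, rlMin] at hmin
      split_ifs at h hmin with c₁ c₂ c₂
      · obtain ⟨b₁, -, -⟩ := bumped_insert hx₁ c₁
        obtain ⟨b₂, -, -⟩ := bumped_insert hx₂ c₂
        simp only [Prod.mk.injEq, cons.injEq] at h
        obtain ⟨rfl, hg⟩ := ih hn₁.2 hn₂.2 (fresh hn₁.1 hf₁ b₁) (fresh hn₂.1 hf₂ b₂) hmin
          (Prod.ext h.1.2 h.2)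
        obtain ⟨rfl, hf⟩ := bump_insert_injective c₁ c₂ hx₁ hx₂ (Prod.ext h.1.1 hg)
        exact ⟨rfl, hf⟩
      · have := (bumped_insert hx₁ c₁).2.1
        simp only [Prod.mk.injEq, cons.injEq] at h
        omega
      · have := (bumped_insert hx₂ c₂).2.1
        simp only [Prod.mk.injEq, cons.injEq] at h
        omega
      · simp only [Prod.mk.injEq, cons.injEq, true_and] at h hmin
        obtain ⟨rfl, hf⟩ := ih hn₁.2 hn₂.2 (fun v hv => hf₁ v (mem_cons_of_mem _ hv))
          (fun v hv => hf₂ v (mem_cons_of_mem _ hv)) hmin.2 (Prod.ext h.1 h.2)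
        exact ⟨by rw [hmin.1], hf⟩

theorem rlMin_subset (l : List ℕ) : rlMin l ⊆ l := by
  induction l with
  | nil => simp [rlMin]
  | cons x xs ih =>
    rw [rlMin]
    split_ifs
    · exact fun v hv => mem_cons_of_mem _ (ih hv)
    · exact cons_subset_cons _ ih

theorem rlMin_pairwise {l : List ℕ} (hl : l.Nodup) : (rlMin l).Pairwise (· < ·) := by
  induction l with
  | nil => simp [rlMin]
  | cons x xs ih =>
    rw [nodup_cons] at hl
    rw [rlMin]
    split_ifs with h
    · exact ih hl.2
    · refine pairwise_cons.2 ⟨fun v hv => ?_, ih hl.2⟩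
      push Not at h
      have hv' := rlMin_subset _ hv
      exact lt_of_le_of_ne (h v hv') fun e => hl.1 (e ▸ hv')

theorem growth_eq_zero_iff {l : List ℕ} {f : ℕ → ℕ} (hl : l.Nodup) (hf : ∀ v ∈ l, f v = 0)
    (v : ℕ) : (growth l f).2 v = 0 ↔ f v = 0 ∧ (v ∈ l → v ∈ rlMin l) := by
  induction l generalizing f with
  | nil => simp [growth]
  | cons x xs ih =>
    rw [nodup_cons] at hl
    have hx := hf x (by simp)
    rw [growth, rlMin]
    split_ifs with h
    · obtain ⟨b, -, -⟩ := bumped_insert hx h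
      rw [ih hl.2 fun w hw => (b.eq_zero_iff w).2 ⟨hf w (mem_cons_of_mem _ hw),
        fun e => hl.1 (e ▸ hw)⟩, b.eq_zero_iff]
      have := @rlMin_subset xs
      have h2 : x ∉ rlMin xs := fun h => hl.1 (this h)
      by_cases hvx : v = x
      · subst hvx; simp [h2]
      · simp [hvx]
    · rw [ih hl.2 fun w hw => hf w (mem_cons_of_mem _ hw)]
      by_cases hvx : v = x
      · subst hvx; simp [hl.1]
      · simp [hvx]

/-! ### Labels are bounded by the lengths of increasing runs -/

/-- `Chain g q v a k`: there are `k` increasing entries above `v`, consisting of rows of strictly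
decreasing positive labels below `a`, followed by a subsequence of `q`. -/
inductive Chain (g : ℕ → ℕ) (q : List ℕ) : ℕ → ℕ → ℕ → Prop
  | tail {v a : ℕ} {s : List ℕ} (hsub : s <+ q) (hinc : s.Pairwise (· < ·))
      (hlt : ∀ z ∈ s, v < z) : Chain g q v a s.length
  | cons {v a w k : ℕ} (hvw : v < w) (hw : 1 ≤ g w) (hwa : g w < a)
      (h : Chain g q w (g w) k) : Chain g q v a (k + 1)

theorem Chain.mono {g : ℕ → ℕ} {q : List ℕ} {v v' a k : ℕ} (h : Chain g q v a k)
    (hv : v' ≤ v) : Chain g q v' a k := by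
  cases h with
  | tail h1 h2 h3 => exact .tail h1 h2 fun z hz => hv.trans_lt (h3 z hz)
  | cons h1 h2 h3 h4 => exact .cons (hv.trans_lt h1) h2 h3 h4

theorem Bumped.chain_aux {xs : List ℕ} {x : ℕ} {f g : ℕ → ℕ} (hb : Bumped xs x f g)
    (q : List ℕ) (k : ℕ) :
    (∀ v a, Chain g q v a k → Chain f (x :: q) v a k) ∧
    (∀ y v a, g y ≠ f y → Chain g q y (f y + 1) k → v < y → f y < a →
      Chain f (x :: q) v a (k + 1)) := by
  induction k with
  | zero =>
    refine ⟨fun v a _ => .tail (s := []) (by simp) (by simp) (by simp), fun y v a hy _ hv ha => ?_⟩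
    by_cases h0 : f y = 0
    · obtain rfl := hb.zero y hy h0
      exact .tail (s := [y]) (by simp) (by simp) (by simpa using hv)
    · exact .cons hv (by omega) ha (.tail (s := []) (by simp) (by simp) (by simp))
  | succ k ih =>
    obtain ⟨ihA, ihB⟩ := ih
    constructor
    · intro v a h
      generalize hk : k + 1 = k' at h
      cases h with
      | tail h1 h2 h3 => exact .tail (h1.cons _) h2 h3
      | @cons _ _ w k' hvw hw hwa h =>
        obtain rfl : k = k' := by omega
        by_cases hne : g w = f w
        · rw [hne] at hw hwa h
          exact .cons hvw hw hwa (ihA _ _ h)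
        · have hs : g w = f w + 1 := (hb.step w).resolve_left hne
          rw [hs] at h
          exact ihB w v a hne h hvw (by omega)
    · intro y v a hy h hv ha
      by_cases h0 : f y = 0
      · obtain rfl := hb.zero y hy h0
        generalize k + 1 = k' at h
        cases h with
        | @tail _ _ s h1 h2 h3 =>
          refine .tail (s := y :: s) (h1.cons_cons _) (pairwise_cons.2 ⟨h3, h2⟩) ?_
          intro z hz
          rcases mem_cons.1 hz with rfl | hz
          · exact hv
          · exact hv.trans (h3 z hz)
        | cons _ h2 h3 _ => omega
      · refine .cons hv (by omega) ha ?_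
        generalize hk : k + 1 = k' at h
        cases h with
        | tail h1 h2 h3 => exact .tail (h1.cons _) h2 h3
        | @cons _ _ w k' hvw hw hwa h =>
          obtain rfl : k = k' := by omega
          by_cases hne : g w = f w
          · rw [hne] at hw hwa h
            by_cases hlt : f w < f y
            · exact .cons hvw hw hlt (ihA _ _ h)
            · have heq : f w = f y := by omega
              obtain ⟨u, hu, hune, hfu, hgap⟩ := hb.ladder y hy h0
              have huw : u ≤ w := by
                by_contra hcon
                exact hgap w hvw (by omega) heq
              rw [heq, ← hfu] at h
              exact ihB u y (f y) hune (h.mono huw) hu (by omega)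
          · have hs : g w = f w + 1 := (hb.step w).resolve_left hne
            rw [hs] at h
            exact ihB w y (f y) hne h hvw (by omega)

/-- Row labels `g` reached after reading `pre`. -/
structure Reached (pre : List ℕ) (g : ℕ → ℕ) : Prop where
  ladder : ∀ v, 2 ≤ g v → ∃ w > v, g w + 1 = g v
  chain : ∀ q v a k, Chain g q v a k →
    ∃ s, s <+ pre ++ q ∧ s.Pairwise (· < ·) ∧ (∀ z ∈ s, v < z) ∧ s.length = k

theorem Reached.zero : Reached [] (fun _ => 0) := by
  refine ⟨fun v h => by simp at h, fun q v a k h => ?_⟩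
  cases h with
  | tail h1 h2 h3 => exact ⟨_, by simpa using h1, h2, h3, rfl⟩
  | cons _ h2 _ _ => simp at h2

theorem Reached.skip {pre : List ℕ} {g : ℕ → ℕ} (h : Reached pre g) (x : ℕ) :
    Reached (pre ++ [x]) g := by
  refine ⟨h.ladder, fun q v a k hc => ?_⟩
  obtain ⟨s, h1, h2⟩ := h.chain q v a k hc
  exact ⟨s, h1.trans (by simp), h2⟩

theorem Reached.insert {pre xs : List ℕ} {x : ℕ} {f g : ℕ → ℕ} (h : Reached pre f)
    (hb : Bumped xs x f g) : Reached (pre ++ [x]) g := by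
  refine ⟨fun v hv => ?_, fun q v a k hc => ?_⟩
  · have up : ∀ w, g w ≠ f w → f w ≠ 0 → ∃ u > w, g u = f w := fun w h1 h2 => by
      obtain ⟨u, hu, hne, hfu, -⟩ := hb.ladder w h1 h2
      exact ⟨u, hu, by rw [(hb.step u).resolve_left hne, hfu]⟩
    by_cases hne : g v = f v
    · obtain ⟨w, hw, hfw⟩ := h.ladder v (by omega)
      by_cases hwe : g w = f w
      · exact ⟨w, hw, by omega⟩
      · obtain ⟨u, hu, hgu⟩ := up w hwe (by omega)
        exact ⟨u, by omega, by omega⟩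
    · have hs := (hb.step v).resolve_left hne
      obtain ⟨u, hu, hgu⟩ := up v hne (by omega)
      exact ⟨u, hu, by omega⟩
  · simpa using h.chain (x :: q) v a k ((hb.chain_aux q k).1 v a hc)

theorem Reached.exists_run {pre : List ℕ} {g : ℕ → ℕ} (h : Reached pre g) {v y : ℕ}
    (hy : y < v) (hv : 1 ≤ g v) :
    ∃ s, s <+ pre ∧ s.Pairwise (· < ·) ∧ (∀ z ∈ s, y < z) ∧ s.length = g v := by
  have key : ∀ k v y a, y < v → g v = k + 1 → k + 1 < a → Chain g [] y a (k + 1) := by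
    intro k
    induction k with
    | zero =>
      intro v y a hy hk ha
      exact .cons hy (by omega) (by omega) (.tail (s := []) (by simp) (by simp) (by simp))
    | succ k ih =>
      intro v y a hy hk ha
      obtain ⟨w, hw, hgw⟩ := h.ladder v (by omega)
      exact .cons hy (by omega) (by omega) (ih w v (g v) hw (by omega) (by omega))
  obtain ⟨k, hk⟩ : ∃ k, g v = k + 1 := ⟨g v - 1, by omega⟩
  obtain ⟨s, hs⟩ := h.chain [] y _ _ (key k v y (k + 2) hy hk (by omega))
  exact ⟨s, by simpa [hk] using hs⟩

theorem HasRun.mono {j k : ℕ} {p : List ℕ} (hjk : j ≤ k) (h : HasRun k p) : HasRun j p := by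
  obtain ⟨s, a, hlen, hinc, hlt, hsub⟩ := h
  refine ⟨s.drop (k - j), a, by simp; omega, hinc.sublist (drop_sublist _ _),
    fun b hb => hlt b (mem_of_mem_drop hb), ((drop_sublist _ _).append_right _).trans hsub⟩

theorem growth_le {t : ℕ} {pre l : List ℕ} {f : ℕ → ℕ} (hl : l.Nodup) (hf : ∀ v ∈ l, f v = 0)
    (hr : Reached pre f) (hft : ∀ v, f v ≤ t) (hrun : ¬ HasRun (t + 1) (pre ++ l)) :
    (∀ c ∈ (growth l f).1, c ≤ t) ∧ ∀ v, (growth l f).2 v ≤ t := by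
  induction l generalizing pre f with
  | nil => simpa [growth] using hft
  | cons x xs ih =>
    rw [nodup_cons] at hl
    have hrun' : ¬ HasRun (t + 1) ((pre ++ [x]) ++ xs) := by simpa using hrun
    rw [growth]
    split_ifs with h
    · obtain ⟨hb, -, u, hu⟩ := bumped_insert (hf x (by simp)) h
      have hr' := hr.insert hb
      have hle : ∀ v, (bump xs x 1 (update f x 1)).2 v ≤ t := by
        intro v
        by_cases hne : (bump xs x 1 (update f x 1)).2 v = f v
        · rw [hne]; exact hft v
        · by_contra hcon
          obtain ⟨y, hy, hyv⟩ := hb.low v hne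
          obtain ⟨s, h1, h2, h3, h4⟩ := hr'.exists_run hyv (by omega)
          refine hrun' (HasRun.mono (k := s.length) (by omega) ⟨s, y, rfl, h2, h3, ?_⟩)
          exact h1.append (singleton_sublist.2 hy)
      obtain ⟨h1, h2⟩ := ih hl.2 (fun v hv => (hb.eq_zero_iff v).2
        ⟨hf v (mem_cons_of_mem _ hv), fun e => hl.1 (e ▸ hv)⟩) hr' hle hrun'
      refine ⟨fun c hc => ?_, h2⟩
      rcases mem_cons.1 hc with rfl | hc
      · rw [← hu]; exact hle u
      · exact h1 c hc
    · obtain ⟨h1, h2⟩ := ih hl.2 (fun v hv => hf v (mem_cons_of_mem _ hv)) (hr.skip x) hft hrun'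
      refine ⟨fun c hc => ?_, h2⟩
      rcases mem_cons.1 hc with rfl | hc
      · omega
      · exact h1 c hc

theorem eq_of_growth_eq {p q : List ℕ} (hp : p.Nodup) (hpq : p.Perm q)
    (h : growth p (fun _ => 0) = growth q (fun _ => 0)) : p = q := by
  have hq := hpq.nodup_iff.1 hp
  refine (growth_injective hp hq (by simp) (by simp) ?_ h).1
  refine Perm.eq_of_pairwise (le := (· < ·)) (fun a b _ _ h1 h2 => absurd h1 h2.asymm)
    (rlMin_pairwise hp) (rlMin_pairwise hq) ?_
  refine (perm_ext_iff_of_nodup ((rlMin_pairwise hp).imp ne_of_lt)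
    ((rlMin_pairwise hq).imp ne_of_lt)).2 fun v => ?_
  have h1 := growth_eq_zero_iff hp (f := fun _ => 0) (by simp) v
  have h2 := growth_eq_zero_iff hq (f := fun _ => 0) (by simp) v
  rw [h] at h1
  have h3 := h1.symm.trans h2
  have h4 := @rlMin_subset p v
  have h5 := @rlMin_subset q v
  have h6 := hpq.mem_iff (a := v)
  simp only [true_and] at h3
  tauto

/-- The labels of `p`, as words of length `n` over an alphabet of size `t + 1`. -/
def labels (t n : ℕ) (p : List ℕ) : (Fin n → Fin (t + 1)) × (Fin n → Fin (t + 1)) :=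
  (fun i => Fin.ofNat (t + 1) ((growth p (fun _ => 0)).1.getD i 0),
   fun i => Fin.ofNat (t + 1) ((growth p (fun _ => 0)).2 (i + 1)))

theorem labels_injOn (t n : ℕ) :
    Set.InjOn (labels t n) {p : List ℕ | p.Perm (range' 1 n) ∧ ¬ HasRun (t + 1) p} := by
  rintro p ⟨hp, hpr⟩ q ⟨hq, hqr⟩ h
  have hpn := hp.nodup_iff.2 nodup_range'
  have hqn := hq.nodup_iff.2 nodup_range'
  obtain ⟨hp1, hp2⟩ := growth_le hpn (by simp) Reached.zero (by simp) hpr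
  obtain ⟨hq1, hq2⟩ := growth_le hqn (by simp) Reached.zero (by simp) hqr
  simp only [labels, Prod.mk.injEq, funext_iff, Fin.ext_iff, Fin.val_ofNat] at h
  refine eq_of_growth_eq hpn (hp.trans hq.symm) (Prod.ext ?_ (funext fun v => ?_))
  · have lp : (growth p (fun _ => 0)).1.length = n := by
      rw [growth_length, hp.length_eq, length_range']
    have lq : (growth q (fun _ => 0)).1.length = n := by
      rw [growth_length, hq.length_eq, length_range']
    refine ext_getElem (by rw [lp, lq]) fun i h1 h2 => ?_
    have h3 := h.1 ⟨i, by omega⟩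
    rw [getD_eq_getElem _ _ h1, getD_eq_getElem _ _ h2,
      Nat.mod_eq_of_lt (Nat.lt_succ_of_le (hp1 _ (getElem_mem h1))),
      Nat.mod_eq_of_lt (Nat.lt_succ_of_le (hq1 _ (getElem_mem h2)))] at h3
    exact h3
  · by_cases hv : v ∈ range' 1 n
    · rw [mem_range'_1] at hv
      have h3 := h.2 ⟨v - 1, by omega⟩
      rw [Nat.mod_eq_of_lt (Nat.lt_succ_of_le (hp2 _)),
        Nat.mod_eq_of_lt (Nat.lt_succ_of_le (hq2 _))] at h3
      simpa [Nat.sub_add_cancel hv.1] using h3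
    · rw [(growth_eq_zero_iff hpn (by simp) v).2 ⟨rfl, fun h => absurd (hp.mem_iff.1 h) hv⟩,
        (growth_eq_zero_iff hqn (by simp) v).2 ⟨rfl, fun h => absurd (hq.mem_iff.1 h) hv⟩]

/-- For all `t ≥ 1` and `n ≥ 1`, the number `W_t(n)` of `t`-stack sortable
permutations of length `n` satisfies `W_t(n) ≤ (t+1)^{2n}`. -/
theorem stmt_3 (t n : ℕ) (ht : 1 ≤ t) (hn : 1 ≤ n) :
    {p : List ℕ | p.Perm (List.range' 1 n) ∧
        stackSort^[t] p = List.range' 1 n}.ncard ≤ (t + 1) ^ (2 * n) := by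
  have hinj : Set.InjOn (labels t n) {p : List ℕ | p.Perm (List.range' 1 n) ∧
      stackSort^[t] p = List.range' 1 n} := by
    refine (labels_injOn t n).mono ?_
    rintro p ⟨hp, hs⟩
    exact ⟨hp, not_hasRun_of_sortable hp hs⟩
  refine (Set.ncard_le_ncard_of_injOn _ (fun p _ => Set.mem_univ _) hinj).trans ?_
  rw [Set.ncard_univ, Nat.card_eq_fintype_card]
  simp [two_mul, pow_add]
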